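/- With the notation of the context, fix ε = 1 or ε = −1, and let ℛ be any linear map from the space of skew-symmetric endomorphisms of ℝ⁴ to itself. Then the following are equivalent: (a) for all J₁ ∈ Λ₊ and J₂ ∈ Λ₋ with J₁∘J₁ = −id and J₂∘J₂ = −id, and all X, Y, Z, U ∈ ℝ⁴, ⟪ℛ(A(X,Y) − A(J₁X,J₁Y)), A(Z,U) − A(J₂Z,J₂U)⟫ = ε·⟪ℛ(A(J₁X,Y) + A(X,J₁Y)), A(J₂Z,U) + A(Z,J₂U)⟫; (b) ⟪ℛ(P), Q⟫ = 0 for all P ∈ Λ₊ and all Q ∈ Λ₋. -/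

import Mathlib

open scoped RealInnerProductSpace

noncomputable section

/-- `V₄` is `ℝ⁴` with its standard inner product. -/
abbrev V₄ := EuclideanSpace ℝ (Fin 4)

/-- `S₁⁺` : `e₁↦e₂, e₂↦−e₁, e₃↦e₄, e₄↦−e₃`. -/
def S1p : V₄ →ₗ[ℝ] V₄ :=
  Matrix.toEuclideanLin !![0,-1,0,0; 1,0,0,0; 0,0,0,-1; 0,0,1,0]

/-- `S₂⁺` : `e₁↦e₃, e₃↦−e₁, e₄↦e₂, e₂↦−e₄`. -/
def S2p : V₄ →ₗ[ℝ] V₄ :=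
  Matrix.toEuclideanLin !![0,0,-1,0; 0,0,0,1; 1,0,0,0; 0,-1,0,0]

/-- `S₃⁺` : `e₁↦e₄, e₄↦−e₁, e₂↦e₃, e₃↦−e₂`. -/
def S3p : V₄ →ₗ[ℝ] V₄ :=
  Matrix.toEuclideanLin !![0,0,0,-1; 0,0,-1,0; 0,1,0,0; 1,0,0,0]

/-- `S₁⁻` : `e₁↦e₂, e₂↦−e₁, e₃↦−e₄, e₄↦e₃`. -/
def S1m : V₄ →ₗ[ℝ] V₄ :=
  Matrix.toEuclideanLin !![0,-1,0,0; 1,0,0,0; 0,0,0,1; 0,0,-1,0]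

/-- `S₂⁻` : `e₁↦e₃, e₃↦−e₁, e₂↦e₄, e₄↦−e₂`. -/
def S2m : V₄ →ₗ[ℝ] V₄ :=
  Matrix.toEuclideanLin !![0,0,-1,0; 0,0,0,-1; 1,0,0,0; 0,1,0,0]

/-- `S₃⁻` : `e₁↦e₄, e₄↦−e₁, e₂↦−e₃, e₃↦e₂`. -/
def S3m : V₄ →ₗ[ℝ] V₄ :=
  Matrix.toEuclideanLin !![0,0,0,-1; 0,0,1,0; 0,-1,0,0; 1,0,0,0]

/-- `Λ₊`, the span of `S₁⁺, S₂⁺, S₃⁺`: the image of the space of self-dual 2-vectors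
under the identification `a ↦ K_a`. -/
def Lp : Submodule ℝ (V₄ →ₗ[ℝ] V₄) := Submodule.span ℝ {S1p, S2p, S3p}

/-- `Λ₋`, the span of `S₁⁻, S₂⁻, S₃⁻`: the image of the space of anti-self-dual
2-vectors under the identification `a ↦ K_a`. -/
def Lm : Submodule ℝ (V₄ →ₗ[ℝ] V₄) := Submodule.span ℝ {S1m, S2m, S3m}

/-- The skew-symmetric endomorphism `A(X,Y) : Z ↦ ⟨X,Z⟩Y − ⟨Y,Z⟩X` of `ℝ⁴`,
corresponding to the 2-vector `X∧Y`. -/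
def A (X Y : V₄) : V₄ →ₗ[ℝ] V₄ :=
  LinearMap.smulRight (innerₛₗ ℝ X) Y - LinearMap.smulRight (innerₛₗ ℝ Y) X

/-- The inner product of 2-vectors transported to skew-symmetric endomorphisms:
`⟪P,Q⟫ = −¼·trace(P∘Q)`. -/
def ipE (P Q : V₄ →ₗ[ℝ] V₄) : ℝ := -(1 / 4 : ℝ) * LinearMap.trace ℝ V₄ (P ∘ₗ Q)

/-!
For `J ∈ Λ₊` with `J² = -1` one has `A(X,Y) - A(JX,JY) = P + JPJ` and
`A(JX,Y) + A(X,JY) = JP - PJ`, where `P = A(X,Y)`. The spaces `Λ₊` and `Λ₋` are commuting copies of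
the imaginary quaternions and together they span all the `P = A(X,Y)`, so both expressions kill the
`Λ₋`-part of `P` and lie in `Λ₊`; likewise with the signs exchanged. Hence the vanishing of the
mixed part gives `0 = 0` in the identity. Conversely, replacing `J₁` by `-J₁` changes the sign of
the right side only, so both sides vanish, and the sum of `P + JPJ` over `J = i, j, k` is
`4P` for `P` in `Λ₊`, and likewise in `Λ₋`.
-/

open scoped Quaternion

section

variable {R E : Type*} [CommRing R] [Ring E] [Algebra R E]

variable (R) in
/-- The map `P ↦ P + JPJ`. When `J² = -1` it is twice the projection onto the elements that
anticommute with `J`; the factor two keeps it defined over every commutative ring. -/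
def twiceAnticommutingPart (J : E) : E →ₗ[R] E :=
  LinearMap.id + LinearMap.mulLeftRight R (J, J)

@[simp]
lemma twiceAnticommutingPart_apply (J P : E) :
    twiceAnticommutingPart R J P = P + J * P * J := by
  simp [twiceAnticommutingPart]

lemma bilin_eq_zero_of_mem_span {N N' M : Type*} [AddCommGroup N] [Module R N]
    [AddCommGroup N'] [Module R N'] [AddCommGroup M] [Module R M] {B : N →ₗ[R] N' →ₗ[R] M}
    {S : Set N} {T : Set N'} (h : ∀ x ∈ S, ∀ y ∈ T, B x y = 0) {x : N} {y : N'}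
    (hx : x ∈ Submodule.span R S) (hy : y ∈ Submodule.span R T) : B x y = 0 := by
  have hle : Submodule.map₂ B (Submodule.span R S) (Submodule.span R T) ≤ ⊥ := by
    rw [Submodule.map₂_span_span, Submodule.span_le]
    rintro _ ⟨x, hx, y, hy, rfl⟩
    exact h x hx y hy
  exact Submodule.map₂_le.1 hle x hx y hy

variable (R E) in
/-- A triple `i, j, k` of elements of an `R`-algebra satisfying Hamilton's relations
`i² = j² = -1`, `ij = k = -ji`. It amounts to a representation `lift` of the quaternions in `E`. -/
abbrev QuaternionTriple := QuaternionAlgebra.Basis E (-1 : R) 0 (-1)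

namespace QuaternionTriple

/-- The image of the purely imaginary quaternions under the representation given by a triple. -/
def im (q : QuaternionTriple R E) : Submodule R E := Submodule.span R {q.i, q.j, q.k}

lemma i_mem_im (q : QuaternionTriple R E) : q.i ∈ q.im := Submodule.subset_span (by simp)

lemma j_mem_im (q : QuaternionTriple R E) : q.j ∈ q.im := Submodule.subset_span (by simp)

lemma k_mem_im (q : QuaternionTriple R E) : q.k ∈ q.im := Submodule.subset_span (by simp)

lemma i_mul_i_eq_neg_one (q : QuaternionTriple R E) : q.i * q.i = -1 := by
  simp [q.i_mul_i]

lemma j_mul_j_eq_neg_one (q : QuaternionTriple R E) : q.j * q.j = -1 := by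
  simp [q.j_mul_j]

lemma k_mul_k_eq_neg_one (q : QuaternionTriple R E) : q.k * q.k = -1 := by
  simp [q.k_mul_k]

lemma mem_im_iff {q : QuaternionTriple R E} {x : E} :
    x ∈ q.im ↔ ∃ a : ℍ[R,-1,-1], a.re = 0 ∧ q.lift a = x := by
  rw [im, Submodule.mem_span_triple]
  constructor
  · rintro ⟨b, c, d, rfl⟩
    exact ⟨⟨0, b, c, d⟩, rfl, by simp [QuaternionAlgebra.Basis.lift]⟩
  · rintro ⟨a, ha, rfl⟩
    exact ⟨a.imI, a.imJ, a.imK, by simp [QuaternionAlgebra.Basis.lift, ha]⟩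

lemma commutator_mem_im {q : QuaternionTriple R E} {x y : E} (hx : x ∈ q.im) (hy : y ∈ q.im) :
    x * y - y * x ∈ q.im := by
  obtain ⟨a, -, rfl⟩ := mem_im_iff.1 hx
  obtain ⟨b, -, rfl⟩ := mem_im_iff.1 hy
  have hre : (a * b - b * a).re = 0 := by
    simp only [QuaternionAlgebra.re_sub, QuaternionAlgebra.re_mul]
    ring
  have hlift : q.lift (a * b - b * a) = q.lift a * q.lift b - q.lift b * q.lift a := by
    rw [← q.lift_mul, ← q.lift_mul]
    exact map_sub q.liftHom _ _
  exact mem_im_iff.2 ⟨a * b - b * a, hre, hlift⟩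

lemma mul_mul_mem_im {q : QuaternionTriple R E} {x y : E} (hx : x ∈ q.im) (hy : y ∈ q.im) :
    x * y * x ∈ q.im := by
  obtain ⟨a, ha, rfl⟩ := mem_im_iff.1 hx
  obtain ⟨b, hb, rfl⟩ := mem_im_iff.1 hy
  have hre : (a * b * a).re = 0 := by
    simp only [QuaternionAlgebra.re_mul, QuaternionAlgebra.imI_mul, QuaternionAlgebra.imJ_mul,
      QuaternionAlgebra.imK_mul, ha, hb]
    ring
  exact mem_im_iff.2 ⟨a * b * a, hre, by simp only [q.lift_mul]⟩

lemma sum_twiceAnticommutingPart {q : QuaternionTriple R E} {x : E} (hx : x ∈ q.im) :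
    twiceAnticommutingPart R q.i x + twiceAnticommutingPart R q.j x
      + twiceAnticommutingPart R q.k x = 4 • x := by
  obtain ⟨b, c, d, rfl⟩ := Submodule.mem_span_triple.1 hx
  have hi : q.i * (b • q.i + c • q.j + d • q.k) * q.i = -(b • q.i) + c • q.j + d • q.k := by
    simp [mul_add, add_mul]
  have hj : q.j * (b • q.i + c • q.j + d • q.k) * q.j = b • q.i + -(c • q.j) + d • q.k := by
    simp [mul_add, add_mul]
  have hk : q.k * (b • q.i + c • q.j + d • q.k) * q.k = b • q.i + c • q.j + -(d • q.k) := by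
    simp [mul_add, add_mul]
  simp only [twiceAnticommutingPart_apply, hi, hj, hk]
  module

lemma commute_of_commute_i_of_commute_j {q : QuaternionTriple R E} {x y : E}
    (hi : Commute x q.i) (hj : Commute x q.j) (hy : y ∈ q.im) : Commute x y := by
  obtain ⟨b, c, d, rfl⟩ := Submodule.mem_span_triple.1 hy
  have hk : Commute x q.k := q.i_mul_j ▸ hi.mul_right hj
  exact ((hi.smul_right b).add_right (hj.smul_right c)).add_right (hk.smul_right d)

lemma commute_of_mem_im {q q' : QuaternionTriple R E} (hii : Commute q.i q'.i)
    (hij : Commute q.i q'.j) (hji : Commute q.j q'.i) (hjj : Commute q.j q'.j) {x y : E}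
    (hx : x ∈ q.im) (hy : y ∈ q'.im) : Commute x y :=
  (commute_of_commute_i_of_commute_j (commute_of_commute_i_of_commute_j hii hij hy).symm
    (commute_of_commute_i_of_commute_j hji hjj hy).symm hx).symm

variable {q q' : QuaternionTriple R E} {J P : E}

lemma twiceAnticommutingPart_mem_im (hcomm : ∀ x ∈ q.im, ∀ y ∈ q'.im, Commute x y)
    (hJ : J ∈ q.im) (hJJ : J * J = -1) (hP : P ∈ q.im ⊔ q'.im) :
    twiceAnticommutingPart R J P ∈ q.im := by
  obtain ⟨x, hx, y, hy, rfl⟩ := Submodule.mem_sup.1 hP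
  have hy_zero : twiceAnticommutingPart R J y = 0 := by
    rw [twiceAnticommutingPart_apply, (hcomm J hJ y hy).eq, mul_assoc, hJJ, mul_neg_one,
      add_neg_cancel]
  rw [map_add, hy_zero, add_zero, twiceAnticommutingPart_apply]
  exact add_mem hx (mul_mul_mem_im hJ hx)

lemma commutator_mem_im_of_mem_sup (hcomm : ∀ x ∈ q.im, ∀ y ∈ q'.im, Commute x y)
    (hJ : J ∈ q.im) (hP : P ∈ q.im ⊔ q'.im) : J * P - P * J ∈ q.im := by
  obtain ⟨x, hx, y, hy, rfl⟩ := Submodule.mem_sup.1 hP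
  have hxy : J * (x + y) - (x + y) * J = J * x - x * J := by
    rw [mul_add, add_mul, (hcomm J hJ y hy).eq, add_sub_add_right_eq_sub]
  exact hxy ▸ commutator_mem_im hJ hx

variable {M : Type*} [AddCommGroup M] [Module R M] {B : E →ₗ[R] E →ₗ[R] M}

lemma eq_zero_of_twiceAnticommutingPart_eq_zero [IsAddTorsionFree M]
    (h : ∀ J₁ ∈ q.im, ∀ J₂ ∈ q'.im, J₁ * J₁ = -1 → J₂ * J₂ = -1 → ∀ P ∈ q.im, ∀ Q ∈ q'.im,
      B (twiceAnticommutingPart R J₁ P) (twiceAnticommutingPart R J₂ Q) = 0)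
    {P Q : E} (hP : P ∈ q.im) (hQ : Q ∈ q'.im) : B P Q = 0 := by
  have h_left (J₂ : E) (hJ₂ : J₂ ∈ q'.im) (hJJ₂ : J₂ * J₂ = -1) :
      B P (twiceAnticommutingPart R J₂ Q) = 0 := by
    have h_four : 4 • B P (twiceAnticommutingPart R J₂ Q) = 0 := by
      rw [← LinearMap.smul_apply, ← map_nsmul, ← sum_twiceAnticommutingPart hP, map_add, map_add,
        LinearMap.add_apply, LinearMap.add_apply,
        h q.i q.i_mem_im J₂ hJ₂ q.i_mul_i_eq_neg_one hJJ₂ P hP Q hQ,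
        h q.j q.j_mem_im J₂ hJ₂ q.j_mul_j_eq_neg_one hJJ₂ P hP Q hQ,
        h q.k q.k_mem_im J₂ hJ₂ q.k_mul_k_eq_neg_one hJJ₂ P hP Q hQ, add_zero, add_zero]
    exact (smul_eq_zero_iff_right four_ne_zero).1 h_four
  have h_four : 4 • B P Q = 0 := by
    rw [← map_nsmul, ← sum_twiceAnticommutingPart hQ, map_add, map_add,
      h_left q'.i q'.i_mem_im q'.i_mul_i_eq_neg_one, h_left q'.j q'.j_mem_im q'.j_mul_j_eq_neg_one,
      h_left q'.k q'.k_mem_im q'.k_mul_k_eq_neg_one, add_zero, add_zero]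
  exact (smul_eq_zero_iff_right four_ne_zero).1 h_four

theorem twiceAnticommutingPart_identity_iff_eq_zero [IsAddTorsionFree M]
    (hcomm : ∀ x ∈ q.im, ∀ y ∈ q'.im, Commute x y) {S : Set E}
    (hS : Submodule.span R S = q.im ⊔ q'.im) (ε : R) :
    (∀ J₁ ∈ q.im, ∀ J₂ ∈ q'.im, J₁ * J₁ = -1 → J₂ * J₂ = -1 → ∀ P ∈ S, ∀ Q ∈ S,
      B (twiceAnticommutingPart R J₁ P) (twiceAnticommutingPart R J₂ Q)
        = ε • B (J₁ * P - P * J₁) (J₂ * Q - Q * J₂)) ↔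
    ∀ P ∈ q.im, ∀ Q ∈ q'.im, B P Q = 0 := by
  constructor
  · intro h P hP Q hQ
    refine eq_zero_of_twiceAnticommutingPart_eq_zero ?_ hP hQ
    intro J₁ hJ₁ J₂ hJ₂ hJJ₁ hJJ₂ P hP Q hQ
    have h_simple : ∀ P ∈ S, ∀ Q ∈ S,
        B.compl₁₂ (twiceAnticommutingPart R J₁) (twiceAnticommutingPart R J₂) P Q = 0 := by
      intro P hP Q hQ
      -- Replacing `J₁` by `-J₁` fixes the left side of the identity and negates the right side.
      have h_neg := h (-J₁) (neg_mem hJ₁) J₂ hJ₂ (by rw [neg_mul_neg, hJJ₁]) hJJ₂ P hP Q hQ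
      have h_even : twiceAnticommutingPart R (-J₁) P = twiceAnticommutingPart R J₁ P := by simp
      have h_odd : -J₁ * P - P * -J₁ = -(J₁ * P - P * J₁) := by noncomm_ring
      rw [h_even, h_odd, map_neg, LinearMap.neg_apply, smul_neg,
        ← h J₁ hJ₁ J₂ hJ₂ hJJ₁ hJJ₂ P hP Q hQ] at h_neg
      exact self_eq_neg.1 h_neg
    refine bilin_eq_zero_of_mem_span h_simple ?_ ?_
    · exact hS ▸ Submodule.mem_sup_left hP
    · exact hS ▸ Submodule.mem_sup_right hQ
  · intro h J₁ hJ₁ J₂ hJ₂ hJJ₁ hJJ₂ P hP Q hQ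
    have hcomm' : ∀ x ∈ q'.im, ∀ y ∈ q.im, Commute x y :=
      fun x hx y hy ↦ (hcomm y hy x hx).symm
    replace hP : P ∈ q.im ⊔ q'.im := hS ▸ Submodule.subset_span hP
    replace hQ : Q ∈ q'.im ⊔ q.im := sup_comm q.im q'.im ▸ hS ▸ Submodule.subset_span hQ
    rw [h _ (twiceAnticommutingPart_mem_im hcomm hJ₁ hJJ₁ hP)
        _ (twiceAnticommutingPart_mem_im hcomm' hJ₂ hJJ₂ hQ),
      h _ (commutator_mem_im_of_mem_sup hcomm hJ₁ hP)
        _ (commutator_mem_im_of_mem_sup hcomm' hJ₂ hQ), smul_zero]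

end QuaternionTriple

end

lemma S1p_apply (Z : V₄) : S1p Z = !₂[-Z 1, Z 0, -Z 3, Z 2] := by
  ext l; fin_cases l <;> simp [S1p, Matrix.toLpLin_apply, dotProduct, Fin.sum_univ_four]

lemma S2p_apply (Z : V₄) : S2p Z = !₂[-Z 2, Z 3, Z 0, -Z 1] := by
  ext l; fin_cases l <;> simp [S2p, Matrix.toLpLin_apply, dotProduct, Fin.sum_univ_four]

lemma S3p_apply (Z : V₄) : S3p Z = !₂[-Z 3, -Z 2, Z 1, Z 0] := by
  ext l; fin_cases l <;> simp [S3p, Matrix.toLpLin_apply, dotProduct, Fin.sum_univ_four]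

lemma S1m_apply (Z : V₄) : S1m Z = !₂[-Z 1, Z 0, Z 3, -Z 2] := by
  ext l; fin_cases l <;> simp [S1m, Matrix.toLpLin_apply, dotProduct, Fin.sum_univ_four]

lemma S2m_apply (Z : V₄) : S2m Z = !₂[-Z 2, -Z 3, Z 0, Z 1] := by
  ext l; fin_cases l <;> simp [S2m, Matrix.toLpLin_apply, dotProduct, Fin.sum_univ_four]

lemma S3m_apply (Z : V₄) : S3m Z = !₂[-Z 3, Z 2, -Z 1, Z 0] := by
  ext l; fin_cases l <;> simp [S3m, Matrix.toLpLin_apply, dotProduct, Fin.sum_univ_four]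

/-- The triple `S₁⁺, S₂⁺, S₃⁺`, whose span is `Λ₊`. -/
def selfDualTriple : QuaternionTriple ℝ (V₄ →ₗ[ℝ] V₄) where
  i := S1p
  j := S2p
  k := S3p
  i_mul_i := by ext Z l; fin_cases l <;> simp [S1p_apply]
  j_mul_j := by ext Z l; fin_cases l <;> simp [S2p_apply]
  i_mul_j := by ext Z l; fin_cases l <;> simp [S1p_apply, S2p_apply, S3p_apply]
  j_mul_i := by ext Z l; fin_cases l <;> simp [S1p_apply, S2p_apply, S3p_apply]

/-- The triple `S₂⁻, S₁⁻, S₃⁻`, whose span is `Λ₋`. The first two are exchanged because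
`S₁⁻S₂⁻ = -S₃⁻`. -/
def antiSelfDualTriple : QuaternionTriple ℝ (V₄ →ₗ[ℝ] V₄) where
  i := S2m
  j := S1m
  k := S3m
  i_mul_i := by ext Z l; fin_cases l <;> simp [S2m_apply]
  j_mul_j := by ext Z l; fin_cases l <;> simp [S1m_apply]
  i_mul_j := by ext Z l; fin_cases l <;> simp [S1m_apply, S2m_apply, S3m_apply]
  j_mul_i := by ext Z l; fin_cases l <;> simp [S1m_apply, S2m_apply, S3m_apply]

lemma im_selfDualTriple : selfDualTriple.im = Lp := rfl

lemma im_antiSelfDualTriple : antiSelfDualTriple.im = Lm := by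
  rw [QuaternionTriple.im, Lm, Set.insert_comm]
  rfl

lemma commute_of_mem_im_selfDualTriple_of_mem_im_antiSelfDualTriple {J K : V₄ →ₗ[ℝ] V₄}
    (hJ : J ∈ selfDualTriple.im) (hK : K ∈ antiSelfDualTriple.im) : Commute J K := by
  refine QuaternionTriple.commute_of_mem_im ?_ ?_ ?_ ?_ hJ hK <;>
  · ext Z l
    fin_cases l <;> simp [selfDualTriple, antiSelfDualTriple, S1p_apply, S2p_apply, S1m_apply,
      S2m_apply]

lemma Lp_sup_Lm_le_skewAdjoint : Lp ⊔ Lm ≤ skewAdjoint.submodule ℝ (V₄ →ₗ[ℝ] V₄) := by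
  rw [Lp, Lm, ← Submodule.span_union, Submodule.span_le]
  have h_skew {S : V₄ →ₗ[ℝ] V₄} (hS : ∀ X Y, ⟪(-S) X, Y⟫ = ⟪X, S Y⟫) :
      S ∈ skewAdjoint.submodule ℝ (V₄ →ₗ[ℝ] V₄) :=
    ((LinearMap.eq_adjoint_iff (-S) S).2 hS).symm
  rintro _ ((rfl | rfl | rfl) | (rfl | rfl | rfl)) <;>
  · refine h_skew fun X Y ↦ ?_
    simp only [PiLp.inner_apply, RCLike.inner_apply, Real.ringHom_apply, Fin.sum_univ_four,
      LinearMap.neg_apply, PiLp.neg_apply, S1p_apply, S2p_apply, S3p_apply, S1m_apply, S2m_apply,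
      S3m_apply, Matrix.cons_val]
    ring

lemma adjoint_eq_neg_of_mem_Lp_sup_Lm {J : V₄ →ₗ[ℝ] V₄} (hJ : J ∈ Lp ⊔ Lm) :
    J.adjoint = -J :=
  Lp_sup_Lm_le_skewAdjoint hJ

lemma adjoint_eq_neg_of_mem_Lp {J : V₄ →ₗ[ℝ] V₄} (hJ : J ∈ Lp) : J.adjoint = -J :=
  adjoint_eq_neg_of_mem_Lp_sup_Lm (Submodule.mem_sup_left hJ)

lemma adjoint_eq_neg_of_mem_Lm {J : V₄ →ₗ[ℝ] V₄} (hJ : J ∈ Lm) : J.adjoint = -J :=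
  adjoint_eq_neg_of_mem_Lp_sup_Lm (Submodule.mem_sup_right hJ)

lemma A_map_map (f : V₄ →ₗ[ℝ] V₄) (X Y : V₄) :
    A (f X) (f Y) = f * A X Y * f.adjoint := by
  ext1 Z
  simp [A, LinearMap.adjoint_inner_right]

lemma A_map_left_add_A_map_right (f : V₄ →ₗ[ℝ] V₄) (X Y : V₄) :
    A (f X) Y + A X (f Y) = f * A X Y + A X Y * f.adjoint := by
  ext1 Z
  simp only [A, LinearMap.add_apply, LinearMap.sub_apply, LinearMap.coe_smulRight,
    innerₛₗ_apply_apply, Module.End.mul_apply, map_sub, map_smul, LinearMap.adjoint_inner_right]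
  abel

lemma sum_A_map {ι : Type*} [Fintype ι] (b : OrthonormalBasis ι ℝ V₄) (f : V₄ →ₗ[ℝ] V₄) :
    ∑ i, A (b i) (f (b i)) = f - f.adjoint := by
  ext1 Z
  have h_map : ∑ i, ⟪b i, Z⟫ • f (b i) = f Z := by
    simp only [← map_smul, ← map_sum, b.sum_repr']
  have h_adjoint : ∑ i, ⟪f (b i), Z⟫ • b i = f.adjoint Z := by
    simp only [← LinearMap.adjoint_inner_right, b.sum_repr']
  simp [A, h_map, h_adjoint]

lemma A_sub_A_map_map {J : V₄ →ₗ[ℝ] V₄} (hJ : J.adjoint = -J) (X Y : V₄) :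
    A X Y - A (J X) (J Y) = twiceAnticommutingPart ℝ J (A X Y) := by
  rw [A_map_map, hJ, mul_neg, sub_neg_eq_add, twiceAnticommutingPart_apply]

lemma A_map_left_add_A_map_right_eq_commutator {J : V₄ →ₗ[ℝ] V₄} (hJ : J.adjoint = -J)
    (X Y : V₄) : A (J X) Y + A X (J Y) = J * A X Y - A X Y * J := by
  rw [A_map_left_add_A_map_right, hJ, mul_neg, ← sub_eq_add_neg]

lemma A_mem_Lp_sup_Lm (X Y : V₄) : A X Y ∈ Lp ⊔ Lm := by
  let p (i j : Fin 4) : ℝ := X i * Y j - X j * Y i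
  have h_decomp : A X Y =
      (((p 0 1 + p 2 3) / 2) • S1p + ((p 0 2 - p 1 3) / 2) • S2p + ((p 0 3 + p 1 2) / 2) • S3p)
        + (((p 0 1 - p 2 3) / 2) • S1m + ((p 0 2 + p 1 3) / 2) • S2m
          + ((p 0 3 - p 1 2) / 2) • S3m) := by
    ext Z l
    fin_cases l <;>
    · simp only [p, A, LinearMap.add_apply, LinearMap.sub_apply, LinearMap.smul_apply,
        LinearMap.coe_smulRight, innerₛₗ_apply_apply, PiLp.inner_apply, RCLike.inner_apply,
        Real.ringHom_apply, Fin.sum_univ_four, PiLp.add_apply, PiLp.sub_apply, PiLp.smul_apply,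
        smul_eq_mul, S1p_apply, S2p_apply, S3p_apply, S1m_apply, S2m_apply, S3m_apply, Fin.zero_eta,
        Fin.mk_one, Fin.reduceFinMk, Matrix.cons_val]
      ring
  exact h_decomp ▸ Submodule.add_mem_sup (Submodule.mem_span_triple.2 ⟨_, _, _, rfl⟩)
    (Submodule.mem_span_triple.2 ⟨_, _, _, rfl⟩)

lemma span_A : Submodule.span ℝ {P | ∃ X Y, A X Y = P} = Lp ⊔ Lm := by
  apply le_antisymm
  · rw [Submodule.span_le]
    rintro _ ⟨X, Y, rfl⟩
    exact A_mem_Lp_sup_Lm X Y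
  · intro P hP
    have h_sum : (2⁻¹ : ℝ) • ∑ i, A (EuclideanSpace.basisFun (Fin 4) ℝ i)
        (P (EuclideanSpace.basisFun (Fin 4) ℝ i)) = P := by
      rw [sum_A_map, adjoint_eq_neg_of_mem_Lp_sup_Lm hP]
      module
    rw [← h_sum]
    exact Submodule.smul_mem _ _ (Submodule.sum_mem _ fun i _ ↦ Submodule.subset_span ⟨_, _, rfl⟩)

theorem curvature_identity_iff_mixed_part_vanishes_general {M : Type*} [AddCommGroup M]
    [Module ℝ M] (ε : ℝ) (B : (V₄ →ₗ[ℝ] V₄) →ₗ[ℝ] (V₄ →ₗ[ℝ] V₄) →ₗ[ℝ] M) :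
    (∀ J₁ J₂ : V₄ →ₗ[ℝ] V₄, J₁ ∈ Lp → J₂ ∈ Lm →
        J₁ ∘ₗ J₁ = -LinearMap.id → J₂ ∘ₗ J₂ = -LinearMap.id →
      ∀ X Y Z U : V₄,
        B (A X Y - A (J₁ X) (J₁ Y)) (A Z U - A (J₂ Z) (J₂ U)) =
          ε • B (A (J₁ X) Y + A X (J₁ Y)) (A (J₂ Z) U + A Z (J₂ U))) ↔
    (∀ P Q : V₄ →ₗ[ℝ] V₄, P ∈ Lp → Q ∈ Lm → B P Q = 0) := by
  have : IsAddTorsionFree M := .of_isTorsionFree ℝ M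
  have hcomm : ∀ J ∈ selfDualTriple.im, ∀ K ∈ antiSelfDualTriple.im, Commute J K :=
    fun J hJ K hK ↦ commute_of_mem_im_selfDualTriple_of_mem_im_antiSelfDualTriple hJ hK
  have hspan : Submodule.span ℝ {P | ∃ X Y, A X Y = P} =
      selfDualTriple.im ⊔ antiSelfDualTriple.im := by
    rw [span_A, im_selfDualTriple, im_antiSelfDualTriple]
  have key := QuaternionTriple.twiceAnticommutingPart_identity_iff_eq_zero (B := B) hcomm hspan ε
  rw [im_selfDualTriple, im_antiSelfDualTriple] at key
  refine Iff.trans ⟨?_, ?_⟩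
    (key.trans ⟨fun h P Q hP hQ ↦ h P hP Q hQ, fun h P hP Q hQ ↦ h P Q hP hQ⟩)
  · rintro h J₁ hJ₁ J₂ hJ₂ hJJ₁ hJJ₂ _ ⟨X, Y, rfl⟩ _ ⟨Z, U, rfl⟩
    have hJ₁' := adjoint_eq_neg_of_mem_Lp hJ₁
    have hJ₂' := adjoint_eq_neg_of_mem_Lm hJ₂
    simpa only [A_sub_A_map_map hJ₁', A_sub_A_map_map hJ₂',
      A_map_left_add_A_map_right_eq_commutator hJ₁',
      A_map_left_add_A_map_right_eq_commutator hJ₂'] using h J₁ J₂ hJ₁ hJ₂ hJJ₁ hJJ₂ X Y Z U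
  · intro h J₁ J₂ hJ₁ hJ₂ hJJ₁ hJJ₂ X Y Z U
    have hJ₁' := adjoint_eq_neg_of_mem_Lp hJ₁
    have hJ₂' := adjoint_eq_neg_of_mem_Lm hJ₂
    rw [A_sub_A_map_map hJ₁', A_sub_A_map_map hJ₂',
      A_map_left_add_A_map_right_eq_commutator hJ₁',
      A_map_left_add_A_map_right_eq_commutator hJ₂']
    exact h J₁ hJ₁ J₂ hJ₂ hJJ₁ hJJ₂ _ ⟨X, Y, rfl⟩ _ ⟨Z, U, rfl⟩

/-- The inner product `ipE` as a bilinear form. -/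
def ipEBilin : LinearMap.BilinForm ℝ (V₄ →ₗ[ℝ] V₄) :=
  (-(1 / 4 : ℝ)) • (LinearMap.mul ℝ (Module.End ℝ V₄)).compr₂ (LinearMap.trace ℝ V₄)

/-- key algebraic step in Theorem 5.3.  For `ε = ±1` and any linear
operator `ℛ` on endomorphisms (playing the role of the curvature operator `ℛ^D` on
skew-symmetric endomorphisms ≅ 2-vectors), the identity (int), quantified over all pairs
`(J₁,J₂)` with `J₁` a unit self-dual and `J₂` a unit anti-self-dual 2-vector, is
equivalent to `⟪ℛ(P),Q⟫ = 0` for all self-dual `P` and anti-self-dual `Q`. -/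
theorem curvature_identity_iff_mixed_part_vanishes
    (ε : ℝ) (hε : ε = 1 ∨ ε = -1)
    (R : (V₄ →ₗ[ℝ] V₄) →ₗ[ℝ] (V₄ →ₗ[ℝ] V₄)) :
    (∀ J₁ J₂ : V₄ →ₗ[ℝ] V₄, J₁ ∈ Lp → J₂ ∈ Lm →
        J₁ ∘ₗ J₁ = -LinearMap.id → J₂ ∘ₗ J₂ = -LinearMap.id →
      ∀ X Y Z U : V₄,
        ipE (R (A X Y - A (J₁ X) (J₁ Y))) (A Z U - A (J₂ Z) (J₂ U)) =
          ε * ipE (R (A (J₁ X) Y + A X (J₁ Y))) (A (J₂ Z) U + A Z (J₂ U))) ↔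
    (∀ P Q : V₄ →ₗ[ℝ] V₄, P ∈ Lp → Q ∈ Lm → ipE (R P) Q = 0) :=
  curvature_identity_iff_mixed_part_vanishes_general ε (ipEBilin ∘ₗ R)
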